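/- Two finite subsets S, T ⊆ 𝔽₂ⁿ are affinely equivalent if and only if dim E(S) = dim E(T) = r for some r and there exist a basis X₁, …, X_r of E(S), a basis Y₁, …, Y_r of E(T), and an invertible linear map N : 𝔽₂^r → 𝔽₂^r such that |v_X(a)| = |v_Y(N a)| for every a ∈ 𝔽₂^r (i.e., there is a cardinality-preserving linear bijection between the Venn regions of S with respect to E(S) and those of T with respect to E(T)). -/

import Mathlib

/-!
An affine map carries a family `p` to a family `q` exactly when `p` and `q` satisfy the same affine
relations. Over `𝔽₂` a coefficient vector is determined by its support, and the affine relations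
between the points of `S` are the members of `E(S)`. So `S` and `T` are affinely equivalent exactly
when some bijection `S ≃ T` carries `E(S)` to `E(T)`.

Whether `x` lies in `z_X(a)` depends only on the vector `l ∈ 𝔽₂^r` whose Venn region contains `x`:
it says that `a ⬝ᵥ l = 1`. Gluing bijections between the regions of `l` and of `N l` therefore gives
a bijection `S ≃ T` that carries `z_X(a)` to `z_Y(b)`, where `b ⬝ᵥ N l = a ⬝ᵥ l` for all `l`.
-/

open scoped symmDiff

/-- `zSet X a` is the symmetric difference of the sets `X i` over the indices `i` with
`a i = 1` (with `zSet X 0 = ∅`). -/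
def zSet {α : Type*} [DecidableEq α] {r : ℕ} (X : Fin r → Finset α)
    (a : Fin r → ZMod 2) : Finset α :=
  (Finset.univ.filter (fun i => a i = 1)).fold (· ∆ ·) ∅ X

/-- The Venn region of `S` with respect to `X₁, …, X_r` determined by `a ∈ 𝔽₂^r`. -/
def vennRegion {α : Type*} [DecidableEq α] {r : ℕ} (S : Finset α)
    (X : Fin r → Finset α) (a : Fin r → ZMod 2) : Finset α :=
  S.filter (fun x => ∀ i, x ∈ X i ↔ a i = 1)

/-- `E(S)`: the collection of all even zero-sum subsets of `S ⊆ 𝔽₂ⁿ`. -/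
def evenZeroSums {n : ℕ} (S : Finset (Fin n → ZMod 2)) :
    Set (Finset (Fin n → ZMod 2)) :=
  {X | X ⊆ S ∧ Even X.card ∧ (∑ x ∈ X, x) = 0}

section AffineRelations

variable {ι K V W : Type*}

section Semiring

variable [Semiring K] [AddCommMonoid V] [Module K V] [AddCommMonoid W] [Module K W]

variable (K) in
/-- The affine relations of a family `p`: the coefficients `c` with `∑ c i = 0` and
`∑ c i • p i = 0`, encoded as the linear relations between the vectors `(1, p i)` of `K × V`. -/
noncomputable def affineRelations (p : ι → V) : Submodule K (ι →₀ K) :=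
  LinearMap.ker (Finsupp.linearCombination K fun i => ((1 : K), p i))

lemma mem_affineRelations {p : ι → V} {c : ι →₀ K} :
    c ∈ affineRelations K p ↔
      Finsupp.linearCombination K (fun _ => (1 : K)) c = 0 ∧
        Finsupp.linearCombination K p c = 0 := by
  have hfst := Finsupp.apply_linearCombination K (LinearMap.fst K K V) (fun i => ((1 : K), p i)) c
  have hsnd := Finsupp.apply_linearCombination K (LinearMap.snd K K V) (fun i => ((1 : K), p i)) c
  rw [affineRelations, LinearMap.mem_ker, Prod.ext_iff]
  exact and_congr (Eq.congr_left hfst) (Eq.congr_left hsnd)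

lemma linearCombination_add_const (p : ι → V) (v : V) (c : ι →₀ K) :
    Finsupp.linearCombination K (fun i => p i + v) c =
      Finsupp.linearCombination K p c + Finsupp.linearCombination K (fun _ => (1 : K)) c • v := by
  simp only [Finsupp.linearCombination_apply, Finsupp.sum, smul_add, Finset.sum_add_distrib,
    smul_eq_mul, mul_one, Finset.sum_smul]

lemma affineRelations_linearMap_add {L : V →ₗ[K] W} (hL : Function.Injective L) (v : W)
    (p : ι → V) : affineRelations K (fun i => L (p i) + v) = affineRelations K p := by
  ext c
  rw [mem_affineRelations, mem_affineRelations]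
  refine and_congr_right fun hc => ?_
  have hLp : Finsupp.linearCombination K (fun i => L (p i)) c =
      L (Finsupp.linearCombination K p c) :=
    (Finsupp.apply_linearCombination K L p c).symm
  rw [linearCombination_add_const, hc, zero_smul, add_zero, hLp, map_eq_zero_iff L hL]

end Semiring

-- As `p i₀ - p i₀ = 0`, the coefficient of `i₀` is irrelevant on the right-hand side, so it can be
-- adjusted to make the coefficients sum to zero.
lemma sub_single_mem_affineRelations_iff [Ring K] [AddCommGroup V] [Module K V] (p : ι → V)
    (i₀ : ι) (c : ι →₀ K) :
    c - Finsupp.single i₀ (Finsupp.linearCombination K (fun _ => (1 : K)) c) ∈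
        affineRelations K p ↔
      c ∈ LinearMap.ker (Finsupp.linearCombination K fun i => p i - p i₀) := by
  simp [mem_affineRelations, sub_eq_add_neg, linearCombination_add_const]

variable [DivisionRing K] [AddCommGroup V] [Module K V]

lemma exists_linearEquiv_of_ker_eq [AddCommGroup W] [Module K W] [FiniteDimensional K W]
    {f g : W →ₗ[K] V} (h : LinearMap.ker f = LinearMap.ker g) :
    ∃ L : V ≃ₗ[K] V, ∀ w, L (f w) = g w := by
  let e : LinearMap.range f ≃ₗ[K] LinearMap.range g :=
    f.quotKerEquivRange.symm ≪≫ₗ Submodule.quotEquivOfEq _ _ h ≪≫ₗ g.quotKerEquivRange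
  obtain ⟨L, hL⟩ := Submodule.exists_linearEquiv_restrict_eq e
  refine ⟨L, fun w => ?_⟩
  rw [← hL ⟨f w, LinearMap.mem_range_self f w⟩]
  simp only [e, LinearEquiv.trans_apply, LinearMap.quotKerEquivRange_symm_apply_image,
    Submodule.mkQ_apply, Submodule.quotEquivOfEq_mk, LinearMap.quotKerEquivRange_apply_mk]

theorem affineRelations_eq_iff [Finite ι] {p q : ι → V} :
    affineRelations K p = affineRelations K q ↔
      ∃ (L : V ≃ₗ[K] V) (v : V), ∀ i, L (p i) + v = q i := by
  refine ⟨fun h => ?_, fun ⟨L, v, hq⟩ => ?_⟩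
  · rcases isEmpty_or_nonempty ι with _ | ⟨⟨i₀⟩⟩
    · exact ⟨LinearEquiv.refl K V, 0, isEmptyElim⟩
    have hker : LinearMap.ker (Finsupp.linearCombination K fun i => p i - p i₀) =
        LinearMap.ker (Finsupp.linearCombination K fun i => q i - q i₀) := by
      ext c
      rw [← sub_single_mem_affineRelations_iff, h, sub_single_mem_affineRelations_iff]
    obtain ⟨L, hL⟩ := exists_linearEquiv_of_ker_eq hker
    refine ⟨L, q i₀ - L (p i₀), fun i => ?_⟩
    have hi : L (p i) - L (p i₀) = q i - q i₀ := by simpa using hL (Finsupp.single i 1)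
    rw [add_sub_left_comm, hi, add_sub_cancel]
  · rw [← funext hq]
    exact (affineRelations_linearMap_add L.injective v p).symm

end AffineRelations

section CoefficientsModTwo

variable {α M : Type*} [AddCommMonoid M] [Module (ZMod 2) M]

lemma zmod_two_eq_one_iff_ne_zero {b : ZMod 2} : b = 1 ↔ b ≠ 0 := by
  revert b
  decide

lemma sum_smul_zmod_two [Fintype α] (a : α → ZMod 2) (f : α → M) :
    ∑ i, a i • f i = ∑ i with a i = 1, f i := by
  rw [Finset.sum_filter]
  refine Finset.sum_congr rfl fun i _ => ?_
  split_ifs with h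
  · rw [h, one_smul]
  · rw [not_not.1 (mt zmod_two_eq_one_iff_ne_zero.2 h), zero_smul]

lemma linearCombination_zmod_two (f : α → M) (c : α →₀ ZMod 2) :
    Finsupp.linearCombination (ZMod 2) f c = ∑ i ∈ c.support, f i := by
  rw [Finsupp.linearCombination_apply]
  refine Finset.sum_congr rfl fun i hi => ?_
  simp only [zmod_two_eq_one_iff_ne_zero.2 (Finsupp.mem_support_iff.1 hi), one_smul]

lemma support_injective_zmod_two :
    Function.Injective (Finsupp.support : (α →₀ ZMod 2) → Finset α) := by
  have eq_of_ne_zero_iff : ∀ a b : ZMod 2, (a ≠ 0 ↔ b ≠ 0) → a = b := by decide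
  intro c d h
  ext x
  exact eq_of_ne_zero_iff _ _ (by simp only [← Finsupp.mem_support_iff, h])

lemma exists_support_eq_zmod_two (A : Finset α) : ∃ c : α →₀ ZMod 2, c.support = A :=
  ⟨Finsupp.indicator A fun _ _ => 1, by classical ext i; simp [Finsupp.indicator_apply]⟩

lemma support_add_zmod_two [DecidableEq α] (c d : α →₀ ZMod 2) :
    (c + d).support = c.support ∆ d.support := by
  have add_ne_zero_iff : ∀ a b : ZMod 2, a + b ≠ 0 ↔ a ≠ 0 ∧ ¬b ≠ 0 ∨ b ≠ 0 ∧ ¬a ≠ 0 := by decide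
  ext x
  simpa only [Finset.mem_symmDiff, Finsupp.mem_support_iff, Finsupp.add_apply] using
    add_ne_zero_iff (c x) (d x)

end CoefficientsModTwo

section Bases

variable {α β : Type*} [DecidableEq α] [DecidableEq β] {r : ℕ}

/-- The tuple `X` is a basis of `𝒱`, a collection of finite sets regarded as a vector space over
`𝔽₂` under symmetric difference. -/
def IsSetBasis (X : Fin r → Finset α) (𝒱 : Set (Finset α)) : Prop :=
  Set.range (zSet X) = 𝒱 ∧ Function.Injective (zSet X)

lemma zSet_map (f : α ↪ β) (X : Fin r → Finset α) (a : Fin r → ZMod 2) :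
    zSet (fun i => (X i).map f) a = (zSet X a).map f := by
  have hmap : ∀ A B : Finset α, (A ∆ B).map f = A.map f ∆ B.map f := fun A B => by
    simp only [Finset.map_eq_image, Finset.image_symmDiff A B f.injective]
  exact Finset.fold_hom (b := ∅) hmap

lemma IsSetBasis.map (f : α ↪ β) {X : Fin r → Finset α} {𝒱 : Set (Finset α)}
    (h : IsSetBasis X 𝒱) : IsSetBasis (fun i => (X i).map f) (Finset.map f '' 𝒱) := by
  have hcomp : zSet (fun i => (X i).map f) = Finset.map f ∘ zSet X := funext (zSet_map f X)
  rw [IsSetBasis, hcomp, Set.range_comp, h.1]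
  exact ⟨rfl, (Finset.map_injective f).comp h.2⟩

lemma zSet_support (c : Fin r → α →₀ ZMod 2) (a : Fin r → ZMod 2) :
    zSet (fun i => (c i).support) a = (∑ i, a i • c i).support := by
  rw [sum_smul_zmod_two, Finset.sum_eq_fold]
  exact Finset.fold_hom (op' := (· ∆ · : Finset α → Finset α → Finset α)) (b := 0)
    support_add_zmod_two

theorem exists_isSetBasis_support (W : Submodule (ZMod 2) (α →₀ ZMod 2))
    [FiniteDimensional (ZMod 2) W] :
    ∃ (r : ℕ) (X : Fin r → Finset α),
      IsSetBasis X (Finsupp.support '' (W : Set (α →₀ ZMod 2))) := by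
  let b := Module.finBasis (ZMod 2) W
  have hz : zSet (fun i => (b i : α →₀ ZMod 2).support) =
      Finsupp.support ∘ Subtype.val ∘ b.equivFun.symm := by
    ext1 a
    simp [zSet_support, b.equivFun_symm_apply]
  refine ⟨_, fun i => (b i : α →₀ ZMod 2).support, ?_, ?_⟩
  · rw [hz, Set.range_comp, b.equivFun.symm.surjective.range_comp, Subtype.range_coe]
  · rw [hz]
    exact support_injective_zmod_two.comp
      (Subtype.val_injective.comp b.equivFun.symm.injective)

end Bases

section VennRegions

variable {α β ι : Type*} [DecidableEq α] [DecidableEq β] {r r' : ℕ}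

/-- The vector `a ∈ 𝔽₂^r` whose Venn region with respect to `X₁, …, X_r` contains `x`. -/
def vennLabel (X : Fin r → Finset α) (x : α) : Fin r → ZMod 2 :=
  fun i => if x ∈ X i then 1 else 0

lemma mem_vennRegion {S : Finset α} {X : Fin r → Finset α} {a : Fin r → ZMod 2} {x : α} :
    x ∈ vennRegion S X a ↔ x ∈ S ∧ vennLabel X x = a := by
  have hcoord : ∀ i, (x ∈ X i ↔ a i = 1) ↔ vennLabel X x i = a i := fun i => by
    by_cases hx : x ∈ X i
    · simp [vennLabel, hx, eq_comm]
    · simp [vennLabel, hx, zmod_two_eq_one_iff_ne_zero, eq_comm]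
  simp only [vennRegion, Finset.mem_filter, funext_iff, hcoord]

lemma vennRegion_map (f : α ↪ β) (S : Finset α) (X : Fin r → Finset α) (a : Fin r → ZMod 2) :
    vennRegion (S.map f) (fun i => (X i).map f) a = (vennRegion S X a).map f := by
  simp only [vennRegion, Finset.filter_map, Function.comp_def, Finset.mem_map']

lemma mem_zSet_iff {X : Fin r → Finset α} {a : Fin r → ZMod 2} {x : α} :
    x ∈ zSet X a ↔ a ⬝ᵥ vennLabel X x = 1 := by
  let ind : Finset α → ZMod 2 := fun A => if x ∈ A then 1 else 0
  have hadd : ∀ A B, ind (A ∆ B) = ind A + ind B := by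
    intro A B
    by_cases hA : x ∈ A <;> by_cases hB : x ∈ B <;>
      simp [ind, Finset.mem_symmDiff, hA, hB, CharTwo.add_self_eq_zero]
  have hind : ind (zSet X a) = a ⬝ᵥ vennLabel X x :=
    calc ind (zSet X a) = ∑ i with a i = 1, vennLabel X x i := by
          rw [Finset.sum_eq_fold]
          exact (Finset.fold_hom (m := ind) hadd).symm
      _ = a ⬝ᵥ vennLabel X x := (sum_smul_zmod_two a _).symm
  rw [← hind]
  simp [ind]

/-- The points of `S` labelled `a` are those of the Venn region of `a`. -/
def vennLabelFiberEquiv (S : Finset α) (X : Fin r → Finset α) (a : Fin r → ZMod 2) :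
    {s : S // vennLabel X s = a} ≃ vennRegion S X a :=
  (Equiv.subtypeSubtypeEquivSubtypeInter (· ∈ S) fun x => vennLabel X x = a).trans
    (Equiv.subtypeEquivRight fun _ => mem_vennRegion.symm)

theorem exists_equiv_vennLabel {S : Finset α} {T : Finset β} {X : Fin r → Finset α}
    {Y : Fin r' → Finset β} (N : (Fin r → ZMod 2) ≃ (Fin r' → ZMod 2))
    (h : ∀ a, (vennRegion S X a).card = (vennRegion T Y (N a)).card) :
    ∃ φ : S ≃ T, ∀ s : S, vennLabel Y (φ s) = N (vennLabel X s) := by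
  let e (a : Fin r → ZMod 2) : {s : S // vennLabel X s = a} ≃
      {t : T // N.symm (vennLabel Y t) = a} :=
    (vennLabelFiberEquiv S X a).trans <| (Finset.equivOfCardEq (h a)).trans <|
      (vennLabelFiberEquiv T Y (N a)).symm.trans <|
        Equiv.subtypeEquivRight fun _ => N.symm_apply_eq.symm
  exact ⟨Equiv.ofFiberEquiv e, fun s => N.symm_apply_eq.1 (Equiv.ofFiberEquiv_map e s)⟩

lemma exists_dotProduct_linearEquiv {K m n : Type*} [CommSemiring K] [Fintype m] [Fintype n]
    (N : (m → K) ≃ₗ[K] (n → K)) (a : m → K) : ∃ b : n → K, ∀ v, b ⬝ᵥ N v = a ⬝ᵥ v := by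
  classical
  let functional : Module.Dual K (n → K) := dotProductEquiv K m a ∘ₗ N.symm.toLinearMap
  refine ⟨(dotProductEquiv K n).symm functional, fun v => ?_⟩
  rw [← dotProductEquiv_apply_apply, LinearEquiv.apply_symm_apply]
  simp [functional]

lemma map_mem_range_zSet {X : Fin r → Finset α} {Y : Fin r' → Finset β} {p : ι ↪ α} {q : ι ↪ β}
    {N : (Fin r → ZMod 2) ≃ₗ[ZMod 2] (Fin r' → ZMod 2)}
    (hN : ∀ i, vennLabel Y (q i) = N (vennLabel X (p i)))
    (hY : ∀ b, ∀ y ∈ zSet Y b, y ∈ Set.range q) {I : Finset ι}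
    (hI : I.map p ∈ Set.range (zSet X)) : I.map q ∈ Set.range (zSet Y) := by
  obtain ⟨a, ha⟩ := hI
  obtain ⟨b, hb⟩ := exists_dotProduct_linearEquiv N a
  have hmem : ∀ i, q i ∈ zSet Y b ↔ i ∈ I := fun i => by
    rw [mem_zSet_iff, hN, hb, ← mem_zSet_iff, ha, Finset.mem_map']
  refine ⟨b, Finset.ext fun y => ⟨fun hy => ?_, fun hy => ?_⟩⟩
  · obtain ⟨i, rfl⟩ := hY b y hy
    rwa [Finset.mem_map', ← hmem]
  · obtain ⟨i, hi, rfl⟩ := Finset.mem_map.1 hy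
    rwa [hmem]

end VennRegions

section EvenZeroSums

variable {ι V W : Type*} [AddCommGroup V] [Module (ZMod 2) V] [AddCommGroup W] [Module (ZMod 2) W]

/-- The collection `E(S)` of even zero-sum subsets of a finite set `S` in an arbitrary vector space
over `𝔽₂`; it unfolds to `evenZeroSums S` in `𝔽₂ⁿ`. -/
def evenZeroSumSubsets {V : Type*} [AddCommMonoid V] (S : Finset V) : Set (Finset V) :=
  {X | X ⊆ S ∧ Even X.card ∧ (∑ x ∈ X, x) = 0}

lemma mem_affineRelations_zmod_two {p : ι → V} {c : ι →₀ ZMod 2} :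
    c ∈ affineRelations (ZMod 2) p ↔ Even c.support.card ∧ ∑ i ∈ c.support, p i = 0 := by
  rw [mem_affineRelations, linearCombination_zmod_two, linearCombination_zmod_two,
    Finset.sum_const, nsmul_one, ZMod.natCast_eq_zero_iff_even]

lemma map_support_mem_evenZeroSumSubsets [Fintype ι] {p : ι ↪ V} {c : ι →₀ ZMod 2} :
    c.support.map p ∈ evenZeroSumSubsets (Finset.univ.map p) ↔ c ∈ affineRelations (ZMod 2) p := by
  rw [mem_affineRelations_zmod_two, evenZeroSumSubsets, Set.mem_ofPred_eq, Finset.card_map,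
    Finset.sum_map, Finset.map_subset_map]
  exact and_iff_right (Finset.subset_univ _)

lemma evenZeroSumSubsets_map_univ [Fintype ι] (p : ι ↪ V) :
    evenZeroSumSubsets (Finset.univ.map p) =
      Finset.map p '' (Finsupp.support '' (affineRelations (ZMod 2) p : Set (ι →₀ ZMod 2))) := by
  ext A
  constructor
  · intro hA
    obtain ⟨I, -, rfl⟩ := Finset.subset_map_iff.1 hA.1
    obtain ⟨c, rfl⟩ := exists_support_eq_zmod_two I
    exact ⟨_, ⟨c, map_support_mem_evenZeroSumSubsets.1 hA, rfl⟩, rfl⟩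
  · rintro ⟨_, ⟨c, hc, rfl⟩, rfl⟩
    exact map_support_mem_evenZeroSumSubsets.2 hc

variable [DecidableEq V] [DecidableEq W]

theorem exists_isSetBasis_of_affineRelations_eq [Fintype ι] (p : ι ↪ V) (q : ι ↪ W)
    (h : affineRelations (ZMod 2) p = affineRelations (ZMod 2) q) :
    ∃ (r : ℕ) (X : Fin r → Finset V) (Y : Fin r → Finset W),
      IsSetBasis X (evenZeroSumSubsets (Finset.univ.map p)) ∧
      IsSetBasis Y (evenZeroSumSubsets (Finset.univ.map q)) ∧
      ∀ a, (vennRegion (Finset.univ.map p) X a).card =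
        (vennRegion (Finset.univ.map q) Y a).card := by
  classical
  obtain ⟨r, Z, hZ⟩ := exists_isSetBasis_support (affineRelations (ZMod 2) p)
  refine ⟨r, fun i => (Z i).map p, fun i => (Z i).map q, ?_, ?_, fun a => ?_⟩
  · exact evenZeroSumSubsets_map_univ p ▸ hZ.map p
  · exact evenZeroSumSubsets_map_univ q ▸ h ▸ hZ.map q
  · rw [vennRegion_map, vennRegion_map, Finset.card_map, Finset.card_map]

lemma affineRelations_le_of_vennLabel [Fintype ι] {r r' : ℕ} {p : ι ↪ V} {q : ι ↪ W}
    {X : Fin r → Finset V} {Y : Fin r' → Finset W}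
    (hX : Set.range (zSet X) = evenZeroSumSubsets (Finset.univ.map p))
    (hY : Set.range (zSet Y) = evenZeroSumSubsets (Finset.univ.map q))
    (N : (Fin r → ZMod 2) ≃ₗ[ZMod 2] (Fin r' → ZMod 2))
    (hN : ∀ i, vennLabel Y (q i) = N (vennLabel X (p i))) :
    affineRelations (ZMod 2) p ≤ affineRelations (ZMod 2) q := by
  have hYq : ∀ b, ∀ y ∈ zSet Y b, y ∈ Set.range q := fun b y hy => by
    have hb : zSet Y b ∈ evenZeroSumSubsets (Finset.univ.map q) := hY ▸ Set.mem_range_self b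
    simpa using hb.1 hy
  intro c hc
  rw [← map_support_mem_evenZeroSumSubsets, ← hX] at hc
  rw [← map_support_mem_evenZeroSumSubsets, ← hY]
  exact map_mem_range_zSet hN hYq hc

theorem affineRelations_eq_of_vennLabel [Fintype ι] {r r' : ℕ} {p : ι ↪ V} {q : ι ↪ W}
    {X : Fin r → Finset V} {Y : Fin r' → Finset W}
    (hX : Set.range (zSet X) = evenZeroSumSubsets (Finset.univ.map p))
    (hY : Set.range (zSet Y) = evenZeroSumSubsets (Finset.univ.map q))
    (N : (Fin r → ZMod 2) ≃ₗ[ZMod 2] (Fin r' → ZMod 2))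
    (hN : ∀ i, vennLabel Y (q i) = N (vennLabel X (p i))) :
    affineRelations (ZMod 2) p = affineRelations (ZMod 2) q :=
  le_antisymm (affineRelations_le_of_vennLabel hX hY N hN) <|
    affineRelations_le_of_vennLabel hY hX N.symm fun i => (N.symm_apply_eq.2 (hN i)).symm

end EvenZeroSums

theorem stmt_16_general {V : Type*} [AddCommGroup V] [Module (ZMod 2) V] [DecidableEq V]
    (S T : Finset V) :
    (∃ (L : V ≃ₗ[ZMod 2] V) (c : V), S.image (fun x => L x + c) = T) ↔
      (∃ (r : ℕ) (X Y : Fin r → Finset V) (N : (Fin r → ZMod 2) ≃ₗ[ZMod 2] (Fin r → ZMod 2)),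
        IsSetBasis X (evenZeroSumSubsets S) ∧ IsSetBasis Y (evenZeroSumSubsets T) ∧
        ∀ a, (vennRegion S X a).card = (vennRegion T Y (N a)).card) := by
  let p : S ↪ V := Function.Embedding.subtype (· ∈ S)
  have hp : Finset.univ.map p = S := S.attach_map_val
  constructor
  · rintro ⟨L, c, rfl⟩
    let q : S ↪ V := p.trans (L.toEquiv.trans (Equiv.addRight c)).toEmbedding
    have hq : Finset.univ.map q = S.image fun x => L x + c := by
      rw [← Finset.map_map, hp, Finset.map_eq_image]
      rfl
    obtain ⟨r, X, Y, hX, hY, hcard⟩ := exists_isSetBasis_of_affineRelations_eq p q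
      (affineRelations_eq_iff.2 ⟨L, c, fun _ => rfl⟩)
    rw [hp] at hX hcard
    rw [hq] at hY hcard
    exact ⟨r, X, Y, LinearEquiv.refl _ _, hX, hY, hcard⟩
  · rintro ⟨r, X, Y, N, hX, hY, hcard⟩
    obtain ⟨φ, hφ⟩ := exists_equiv_vennLabel N.toEquiv hcard
    let q : S ↪ V := φ.toEmbedding.trans (Function.Embedding.subtype (· ∈ T))
    have hq : Finset.univ.map q = T := by
      rw [← Finset.map_map, Finset.map_univ_equiv]
      exact T.attach_map_val
    have hrel : affineRelations (ZMod 2) p = affineRelations (ZMod 2) q :=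
      affineRelations_eq_of_vennLabel (by rw [hp, hX.1]) (by rw [hq, hY.1]) N hφ
    obtain ⟨L, c, hL⟩ := affineRelations_eq_iff.1 hrel
    refine ⟨L, c, ?_⟩
    calc S.image (fun x => L x + c) = (Finset.univ.map p).image fun x => L x + c := by rw [hp]
      _ = Finset.univ.map q := by
        rw [Finset.map_eq_image, Finset.image_image, Finset.map_eq_image]
        exact Finset.image_congr fun i _ => hL i
      _ = T := hq

/-- Two finite subsets `S, T ⊆ 𝔽₂ⁿ` are affinely equivalent if and only if
`dim E(S) = dim E(T) = r` for some `r` and there are bases `X₁, …, X_r` of `E(S)` and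
`Y₁, …, Y_r` of `E(T)` and an invertible linear map `N : 𝔽₂^r → 𝔽₂^r` such that
`|v_X(a)| = |v_Y(N a)|` for every `a ∈ 𝔽₂^r` (a cardinality-preserving linear bijection
between the Venn regions of `S` w.r.t. `E(S)` and those of `T` w.r.t. `E(T)`). -/
theorem stmt_16 (n : ℕ) (S T : Finset (Fin n → ZMod 2)) :
    (∃ (L : (Fin n → ZMod 2) ≃ₗ[ZMod 2] (Fin n → ZMod 2)) (c : Fin n → ZMod 2),
        S.image (fun x => L x + c) = T) ↔
      (∃ (r : ℕ) (X Y : Fin r → Finset (Fin n → ZMod 2))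
          (N : (Fin r → ZMod 2) ≃ₗ[ZMod 2] (Fin r → ZMod 2)),
        (Set.range (zSet X) = evenZeroSums S ∧ Function.Injective (zSet X)) ∧
        (Set.range (zSet Y) = evenZeroSums T ∧ Function.Injective (zSet Y)) ∧
        ∀ a : Fin r → ZMod 2,
          (vennRegion S X a).card = (vennRegion T Y (N a)).card) :=
  stmt_16_general S T
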